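/- For any noise law μ = (μ_k)_{k∈-ℕ} of Borel probability measures on Σ, there exists a solution of Tsirelson's equation with noise law μ (on some probability space). -/

import Mathlib

open MeasureTheory ProbabilityTheory Filter Topology
open scoped NNReal ENNReal

universe u v w w₂

noncomputable section

/-- The sub-σ-field generated by the process `Y` from index `k` on; since index `j : ℕ`
stands for time `-j`, this is the σ-field of the past `σ(Y_j : j ≤ -k)`. -/
def past {Ω α : Type*} [MeasurableSpace α] (Y : ℕ → Ω → α) (k : ℕ) : MeasurableSpace Ω :=
  ⨆ j ≥ k, MeasurableSpace.comap (Y j) inferInstance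

/-- A solution of Tsirelson's equation with noise law `μ`.  The index `k : ℕ` stands for the
time `-k ∈ -ℕ`, so that time `k - 1` corresponds to index `k + 1`. -/
structure IsSolution {Ω S G : Type*} [MeasurableSpace Ω] [MeasurableSpace S] [MeasurableSpace G]
    [SMul G S] (P : Measure Ω) (μ : ℕ → Measure G)
    (X : ℕ → Ω → S) (N : ℕ → Ω → G) : Prop where
  measurable_X : ∀ k, Measurable (X k)
  measurable_N : ∀ k, Measurable (N k)
  eqn : ∀ k, X k =ᵐ[P] fun ω => N k ω • X (k + 1) ω
  indep : ∀ k, Indep (MeasurableSpace.comap (N k) inferInstance)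
      (past X (k + 1) ⊔ past N (k + 1)) P
  law_N : ∀ k, P.map (N k) = μ k

/-- The joint law of `(X, N)` on the path space `S^{-ℕ} × Σ^{-ℕ}`. -/
def jointLaw {Ω S G : Type*} [MeasurableSpace Ω] [MeasurableSpace S] [MeasurableSpace G]
    (P : Measure Ω) (X : ℕ → Ω → S) (N : ℕ → Ω → G) : Measure ((ℕ → S) × (ℕ → G)) :=
  P.map fun ω => (fun k => X k ω, fun k => N k ω)

/-- A solution is strong if each `X k` is a.s. equal to a `past N k`-measurable function,
i.e. `X k` is measurable for the `P`-completion of `σ(N_j : j ≤ -k)`. -/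
def IsStrong {Ω S G : Type*} [MeasurableSpace Ω] [MeasurableSpace S] [MeasurableSpace G]
    (P : Measure Ω) (X : ℕ → Ω → S) (N : ℕ → Ω → G) : Prop :=
  ∀ k, ∃ Y : Ω → S, Measurable[past N k] Y ∧ X k =ᵐ[P] Y

/-- Triviality of the tail σ-field `⨅ k, m k`. -/
def TailTrivial {Ω : Type*} [MeasurableSpace Ω] (P : Measure Ω)
    (m : ℕ → MeasurableSpace Ω) : Prop :=
  ∀ A : Set Ω, MeasurableSet[⨅ k, m k] A → P A = 0 ∨ P A = 1

/-- Convolution `μ * ν` of a measure on the acting semigroup with a measure on the space: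
the pushforward of `μ ⊗ ν` under the action map. -/
def conv {G S : Type*} [MeasurableSpace G] [MeasurableSpace S] [SMul G S]
    (μ : Measure G) (ν : Measure S) : Measure S :=
  (μ.prod ν).map fun p => p.1 • p.2

/-- Convolution of two measures on the semigroup. -/
def convG {G : Type*} [MeasurableSpace G] [Mul G] (μ ν : Measure G) : Measure G :=
  (μ.prod ν).map fun p => p.1 * p.2

/-- `prodN N n j = N_n · N_{n+1} · ⋯ · N_{n+j}`; in the time-indexing of the paper (index `m`
is time `-m`) this is `N_{k,l}` with `k = -n` and `l = -(n+j)-1 → -∞` as `j → ∞`. -/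
def prodN {Ω G : Type*} [Mul G] (N : ℕ → Ω → G) (n : ℕ) : ℕ → Ω → G
  | 0 => N n
  | j + 1 => fun ω => prodN N n j ω * N (n + j + 1) ω

/-- `convIter μ n j = μ_n * μ_{n+1} * ⋯ * μ_{n+j}`, the law analogue of `prodN`. -/
def convIter {G : Type*} [MeasurableSpace G] [Mul G] (μ : ℕ → Measure G) (n : ℕ) :
    ℕ → Measure G
  | 0 => μ n
  | j + 1 => convG (convIter μ n j) (μ (n + j + 1))

/-- `sigPow G n` is `Σ^{n+1}`, the set of products of `n+1` elements of `Σ = G`. -/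
def sigPow (G : Type*) [Mul G] : ℕ → Set G
  | 0 => Set.univ
  | n + 1 => Set.image2 (· * ·) (sigPow G n) Set.univ

/-- Two sub-σ-fields are equal up to `P`-null sets. -/
def EqModNull {Ω : Type*} [MeasurableSpace Ω] (P : Measure Ω)
    (m₁ m₂ : MeasurableSpace Ω) : Prop :=
  (∀ A, MeasurableSet[m₁] A → ∃ B, MeasurableSet[m₂] B ∧ P (symmDiff A B) = 0) ∧
  (∀ B, MeasurableSet[m₂] B → ∃ A, MeasurableSet[m₁] A ∧ P (symmDiff A B) = 0)

end

section Context

variable {S : Type u} {G : Type v}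
  [TopologicalSpace S] [CompactSpace S] [TopologicalSpace.MetrizableSpace S]
  [SecondCountableTopology S] [MeasurableSpace S] [BorelSpace S]
  [TopologicalSpace G] [CompactSpace G] [TopologicalSpace.MetrizableSpace G]
  [SecondCountableTopology G] [MeasurableSpace G] [BorelSpace G]
  [Semigroup G] [ContinuousMul G]
  [SMul G S] [ContinuousSMul G S] [IsScalarTower G G S]

end Context

/-!
Consider the laws on path space `S^{-ℕ} × Σ^{-ℕ}` under which the noise has law `⨂ₖ μₖ`, each noise
variable is independent of the past, and the equation holds at the `n` most recent times. They form
a decreasing sequence of closed sets, all contained in the set of laws with prescribed second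
marginal `⨂ₖ μₖ`, which is compact by Prokhorov's theorem because `S` is compact. They are nonempty:
start the recursion from a fixed point of `S` at time `-n`. A law in the intersection makes the
coordinate process a solution.
-/

section WeakConvergence

variable {E A B : Type*} [TopologicalSpace E] [MeasurableSpace E]
  [TopologicalSpace A] [MeasurableSpace A] [TopologicalSpace B] [MeasurableSpace B]

theorem isClosed_setOf_ae_mem [OpensMeasurableSpace E] [HasOuterApproxClosed E] {F : Set E}
    (hF : IsClosed F) :
    IsClosed {P : ProbabilityMeasure E | ∀ᵐ x ∂P.toMeasure, x ∈ F} := by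
  have ae_mem_iff (P : ProbabilityMeasure E) :
      (∀ᵐ x ∂P.toMeasure, x ∈ F) ↔ P.toMeasure F = 1 :=
    mem_ae_iff_prob_eq_one hF.measurableSet
  simp only [ae_mem_iff]
  refine isClosed_iff_forall_filter.2 fun P l _ hl hlP => le_antisymm prob_le_one ?_
  calc 1 = l.limsup fun Q : ProbabilityMeasure E => Q.toMeasure F :=
        (limsup_const 1).symm.trans (limsup_congr (le_principal_iff.1 hl)).symm
    _ ≤ P.toMeasure F :=
        ProbabilityMeasure.limsup_measure_closed_le_of_tendsto (tendsto_id'.2 hlP) hF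

theorem isClosed_setOf_indepFun [OpensMeasurableSpace E]
    [TopologicalSpace.MetrizableSpace A] [SecondCountableTopology A] [BorelSpace A]
    [TopologicalSpace.MetrizableSpace B] [SecondCountableTopology B] [BorelSpace B]
    {f : E → A} {g : E → B} (hf : Continuous f) (hg : Continuous g) :
    IsClosed {P : ProbabilityMeasure E | IndepFun f g P.toMeasure} := by
  have indepFun_iff (P : ProbabilityMeasure E) : IndepFun f g P.toMeasure ↔
      P.map (hf.prodMk hg).measurable.aemeasurable =
        (P.map hf.measurable.aemeasurable).prod (P.map hg.measurable.aemeasurable) := by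
    rw [← ProbabilityMeasure.toMeasure_injective.eq_iff]
    exact indepFun_iff_map_prod_eq_prod_map_map hf.measurable.aemeasurable
      hg.measurable.aemeasurable
  simp only [indepFun_iff]
  exact isClosed_eq (ProbabilityMeasure.continuous_map (hf.prodMk hg))
    (ProbabilityMeasure.continuous_prod.comp
      ((ProbabilityMeasure.continuous_map hf).prodMk (ProbabilityMeasure.continuous_map hg)))

theorem isCompact_setOf_snd_eq [CompactSpace A] [T2Space A] [BorelSpace A] [PolishSpace B]
    [BorelSpace B] (ν : Measure B) [IsProbabilityMeasure ν] :
    IsCompact {P : ProbabilityMeasure (A × B) | P.toMeasure.snd = ν} := by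
  let couplings : Set (ProbabilityMeasure (A × B)) := {P | P.toMeasure.snd = ν}
  have tight : IsTightMeasureSet (ProbabilityMeasure.toMeasure '' couplings) := by
    refine .prodMk .of_compactSpace (isTightMeasureSet_singleton (μ := ν) |>.subset ?_)
    rintro _ ⟨_, ⟨P, hP, rfl⟩, rfl⟩
    exact hP
  have closed : IsClosed couplings := by
    have snd_eq_iff (P : ProbabilityMeasure (A × B)) : P.toMeasure.snd = ν ↔
        P.map measurable_snd.aemeasurable = ⟨ν, inferInstance⟩ :=
      ⟨fun h => Subtype.ext h, fun h => congrArg Subtype.val h⟩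
    simp only [couplings, snd_eq_iff]
    exact isClosed_eq (ProbabilityMeasure.continuous_map continuous_snd) continuous_const
  have compact_closure : IsCompact (closure couplings) :=
    isCompact_closure_of_isTightMeasureSet tight
  rwa [closed.closure_eq] at compact_closure

end WeakConvergence

section Past

variable {Ω A B C : Type*} [MeasurableSpace A] [MeasurableSpace B] [MeasurableSpace C]

theorem past_antitone (Y : ℕ → Ω → A) : Antitone (past Y) :=
  fun _ _ hkl => biSup_mono fun _ hj => hkl.trans hj

theorem measurable_past (Y : ℕ → Ω → A) (k : ℕ) : Measurable[past Y k] (Y k) :=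
  measurable_iff_comap_le.2 (le_iSup₂_of_le k le_rfl le_rfl)

theorem past_le_iff {Y : ℕ → Ω → A} {k : ℕ} {m : MeasurableSpace Ω} :
    past Y k ≤ m ↔ ∀ j ≥ k, Measurable[m] (Y j) := by
  simp only [past, iSup_le_iff, measurable_iff_comap_le]

theorem past_eq_comap_shift (Y : ℕ → Ω → A) (k : ℕ) :
    past Y k = MeasurableSpace.comap (fun ω j => Y (k + j) ω) inferInstance := by
  refine le_antisymm (past_le_iff.2 fun j hj => ?_) (Measurable.comap_le ?_)
  · obtain ⟨i, rfl⟩ := Nat.exists_eq_add_of_le hj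
    exact (measurable_pi_apply i).comp (comap_measurable fun ω j => Y (k + j) ω)
  · exact @measurable_pi_lambda _ _ _ (past Y k) _ _ fun j =>
      (measurable_past Y (k + j)).mono (past_antitone Y (Nat.le_add_right k j)) le_rfl

theorem past_sup_past_eq_comap_shift (X : ℕ → Ω → A) (N : ℕ → Ω → B) (k : ℕ) :
    past X k ⊔ past N k =
      MeasurableSpace.comap (fun ω => (fun j => X (k + j) ω, fun j => N (k + j) ω))
        inferInstance := by
  rw [past_eq_comap_shift, past_eq_comap_shift]
  exact (MeasurableSpace.comap_prodMk _ _).symm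

variable [MeasurableSpace Ω] {P : Measure Ω}

theorem indep_past_succ_of_iIndepFun {N : ℕ → Ω → B} (hN : ∀ k, Measurable (N k))
    (indep : iIndepFun N P) (k : ℕ) :
    Indep (MeasurableSpace.comap (N k) inferInstance) (past N (k + 1)) P := by
  have singleton_disjoint : Disjoint {k} (Set.Ici (k + 1)) := by simp
  simpa using! indep_iSup_of_disjoint (fun j => (hN j).comap_le) indep singleton_disjoint

theorem indepFun_map_iff {φ : Ω → A} (hφ : Measurable φ) {f : A → B} (hf : Measurable f)
    {g : A → C} (hg : Measurable g) :
    IndepFun f g (P.map φ) ↔ IndepFun (f ∘ φ) (g ∘ φ) P := by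
  simp only [indepFun_iff_measure_inter_preimage_eq_mul]
  refine forall₄_congr fun s t hs ht => ?_
  rw [Measure.map_apply hφ ((hf hs).inter (hg ht)), Measure.map_apply hφ (hf hs),
    Measure.map_apply hφ (hg ht)]
  rfl

theorem indep_past_jointLaw_iff {X : ℕ → Ω → A} {N : ℕ → Ω → B} (hX : ∀ k, Measurable (X k))
    (hN : ∀ k, Measurable (N k)) (k l : ℕ) :
    Indep (MeasurableSpace.comap (fun p : (ℕ → A) × (ℕ → B) => p.2 k) inferInstance)
        (past (fun j p => p.1 j) l ⊔ past (fun j p => p.2 j) l) (jointLaw P X N) ↔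
      Indep (MeasurableSpace.comap (N k) inferInstance) (past X l ⊔ past N l) P := by
  simp only [past_sup_past_eq_comap_shift, ← IndepFun_iff_Indep]
  exact indepFun_map_iff (by fun_prop) (by fun_prop) (by fun_prop)

end Past

section TruncatedOrbit

variable {S G : Type*} [SMul G S]

/-- The solution `x` of the deterministic recursion `x k = g k • x (k + 1)` for `k < n` with
`x k = x₀` for all `k ≥ n`; in the time-indexing of the paper, the orbit started at `x₀` at
time `-n`. -/
def truncatedOrbit (x₀ : S) (n : ℕ) (g : ℕ → G) (k : ℕ) : S :=
  if k < n then g k • truncatedOrbit x₀ n g (k + 1) else x₀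
termination_by n - k

theorem truncatedOrbit_of_lt (x₀ : S) {n k : ℕ} (hk : k < n) (g : ℕ → G) :
    truncatedOrbit x₀ n g k = g k • truncatedOrbit x₀ n g (k + 1) := by
  rw [truncatedOrbit, if_pos hk]

theorem truncatedOrbit_of_le (x₀ : S) {n k : ℕ} (hk : n ≤ k) (g : ℕ → G) :
    truncatedOrbit x₀ n g k = x₀ := by
  rw [truncatedOrbit, if_neg hk.not_gt]

variable [MeasurableSpace S] [MeasurableSpace G] [MeasurableSMul₂ G S] {Ω : Type*}

theorem measurable_past_truncatedOrbit (N : ℕ → Ω → G) (x₀ : S) (n k : ℕ) :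
    Measurable[past N k] fun ω => truncatedOrbit x₀ n (fun j => N j ω) k := by
  rcases le_total n k with hnk | hkn
  · simp only [truncatedOrbit_of_le x₀ hnk]
    exact @measurable_const _ _ _ (past N k) x₀
  induction hkn using Nat.decreasingInduction with
  | self =>
    simp only [truncatedOrbit_of_le x₀ le_rfl]
    exact @measurable_const _ _ _ (past N n) x₀
  | of_succ k hk ih =>
    simp only [truncatedOrbit_of_lt x₀ hk]
    exact (measurable_past N k).smul (ih.mono (past_antitone N k.le_succ) le_rfl)

end TruncatedOrbit

section TruncatedSolutionLaw

variable {S G : Type*} [MeasurableSpace S] [MeasurableSpace G] [SMul G S]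

variable (S) in
/-- The joint laws of pairs `(X, N)` such that `N` is an independent family with laws `μ`, each
`N k` is independent of the past of `(X, N)`, and Tsirelson's equation holds at the indices
`k < n`, i.e. at the times `0, -1, …, -(n - 1)`. -/
def truncatedSolutionLaws (μ : ℕ → Measure G) (n : ℕ) :
    Set (ProbabilityMeasure ((ℕ → S) × (ℕ → G))) :=
  {P | P.toMeasure.snd = Measure.infinitePi μ ∧
    (∀ k, Indep (MeasurableSpace.comap (fun p : (ℕ → S) × (ℕ → G) => p.2 k) inferInstance)
      (past (fun j p => p.1 j) (k + 1) ⊔ past (fun j p => p.2 j) (k + 1)) P.toMeasure) ∧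
    ∀ k < n, ∀ᵐ p ∂P.toMeasure, p.1 k = p.2 k • p.1 (k + 1)}

variable {μ : ℕ → Measure G}

theorem truncatedSolutionLaws_antitone : Antitone (truncatedSolutionLaws S μ) :=
  fun _ _ hmn _ hP => ⟨hP.1, hP.2.1, fun k hk => hP.2.2 k (hk.trans_le hmn)⟩

variable [∀ k, IsProbabilityMeasure (μ k)]

theorem isSolution_of_forall_mem_truncatedSolutionLaws
    {P : ProbabilityMeasure ((ℕ → S) × (ℕ → G))} (hP : ∀ n, P ∈ truncatedSolutionLaws S μ n) :
    IsSolution P.toMeasure μ (fun k p => p.1 k) (fun k p => p.2 k) where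
  measurable_X k := by fun_prop
  measurable_N k := by fun_prop
  eqn k := (hP (k + 1)).2.2 k k.lt_succ_self
  indep := (hP 0).2.1
  law_N k := by
    rw [← Measure.infinitePi_map_eval μ k, ← (hP 0).1, Measure.snd,
      Measure.map_map (measurable_pi_apply k) measurable_snd]
    rfl

theorem truncatedSolutionLaws_nonempty [Nonempty S] [MeasurableSMul₂ G S]
    [MeasurableEq S] (n : ℕ) : (truncatedSolutionLaws S μ n).Nonempty := by
  obtain ⟨x₀⟩ := ‹Nonempty S›
  let N (k : ℕ) (ω : ℕ → G) : G := ω k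
  let X (k : ℕ) (ω : ℕ → G) : S := truncatedOrbit x₀ n ω k
  have hN (k : ℕ) : Measurable (N k) := measurable_pi_apply k
  have hX_past (k : ℕ) : Measurable[past N k] (X k) := measurable_past_truncatedOrbit N x₀ n k
  have hX (k : ℕ) : Measurable (X k) := (hX_past k).mono (past_le_iff.2 fun j _ => hN j) le_rfl
  have hXN : Measurable fun ω => (fun k => X k ω, fun k => N k ω) := by fun_prop
  refine ⟨⟨jointLaw (Measure.infinitePi μ) X N, Measure.isProbabilityMeasure_map hXN.aemeasurable⟩,
    ?snd, fun k => (indep_past_jointLaw_iff hX hN k (k + 1)).2 ?indep, fun k hk => ?eqn⟩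
  case snd => exact (Measure.snd_map_prodMk (measurable_pi_lambda _ hX)).trans Measure.map_id
  case indep =>
    have past_X_le : past X (k + 1) ≤ past N (k + 1) := past_le_iff.2 fun j hj =>
      (hX_past j).mono (past_antitone N hj) le_rfl
    rw [sup_eq_right.2 past_X_le]
    exact indep_past_succ_of_iIndepFun hN (iIndepFun_infinitePi fun _ => measurable_id) k
  case eqn =>
    refine (ae_map_iff hXN.aemeasurable (measurableSet_eq_fun (by fun_prop) (by fun_prop))).2 ?_
    exact .of_forall fun ω => truncatedOrbit_of_lt x₀ hk ω

variable [TopologicalSpace S] [CompactSpace S] [TopologicalSpace.MetrizableSpace S] [BorelSpace S]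
  [TopologicalSpace G] [PolishSpace G] [BorelSpace G] [ContinuousSMul G S]

theorem isCompact_truncatedSolutionLaws (n : ℕ) : IsCompact (truncatedSolutionLaws S μ n) := by
  simp only [truncatedSolutionLaws, past_sup_past_eq_comap_shift, ← IndepFun_iff_Indep,
    Set.ofPred_and, Set.ofPred_forall]
  refine (isCompact_setOf_snd_eq (Measure.infinitePi μ)).inter_right (.inter ?indep ?eqn)
  case indep =>
    exact isClosed_iInter fun k => isClosed_setOf_indepFun (by fun_prop) (by fun_prop)
  case eqn =>
    exact isClosed_iInter fun k => isClosed_iInter fun _ =>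
      isClosed_setOf_ae_mem (isClosed_eq (by fun_prop) (by fun_prop))

theorem tsirelson_exists_solution_general [Nonempty S] (μ : ℕ → Measure G)
    [∀ k, IsProbabilityMeasure (μ k)] :
    ∃ P : ProbabilityMeasure ((ℕ → S) × (ℕ → G)),
      IsSolution P.toMeasure μ (fun k p => p.1 k) (fun k p => p.2 k) := by
  obtain ⟨P, hP⟩ : (⋂ n, truncatedSolutionLaws S μ n).Nonempty :=
    IsCompact.nonempty_iInter_of_sequence_nonempty_isCompact_isClosed _
      (fun n => truncatedSolutionLaws_antitone n.le_succ) truncatedSolutionLaws_nonempty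
      (isCompact_truncatedSolutionLaws 0) fun n => (isCompact_truncatedSolutionLaws n).isClosed
  exact ⟨P, isSolution_of_forall_mem_truncatedSolutionLaws (Set.mem_iInter.1 hP)⟩

end TruncatedSolutionLaw

section Tsirelson

variable {S : Type u} {G : Type v}
  [TopologicalSpace S] [CompactSpace S] [TopologicalSpace.MetrizableSpace S]
  [SecondCountableTopology S] [MeasurableSpace S] [BorelSpace S]
  [TopologicalSpace G] [CompactSpace G] [TopologicalSpace.MetrizableSpace G]
  [SecondCountableTopology G] [MeasurableSpace G] [BorelSpace G]
  [Semigroup G] [ContinuousMul G]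
  [SMul G S] [ContinuousSMul G S] [IsScalarTower G G S]

/-- For any noise law there exists a solution of Tsirelson's equation. -/
theorem tsirelson_exists_solution [Nonempty S]
    (μ : ℕ → Measure G) (hμ : ∀ k, IsProbabilityMeasure (μ k)) :
    ∃ (Ω : Type (max u v)) (_ : MeasurableSpace Ω) (P : Measure Ω)
      (X : ℕ → Ω → S) (N : ℕ → Ω → G),
      IsProbabilityMeasure P ∧ IsSolution P μ X N := by
  let := TopologicalSpace.metrizableSpaceMetric G
  obtain ⟨P, hP⟩ := tsirelson_exists_solution_general (S := S) μ
  exact ⟨(ℕ → S) × (ℕ → G), inferInstance, P, fun k p => p.1 k, fun k p => p.2 k, inferInstance, hP⟩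

end Tsirelson
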